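/- arXiv:2010.05881 — 2 statements merged into one kernel-verified Lean document; each statement's English description precedes it below -/
import Mathlib

section
/- Fix μ̂ > l·d². For every B₀ > 0, the Lebesgue measure of the set of ω⃗ ∈ ([−1/2,1/2]^d)^l for which there exists a nondegenerate d×l integer matrix N with |det(θ₁(ω⃗,N),…,θ_d(ω⃗,N))| < B₀·‖N‖_*^{−μ̂} is at most C(μ̂)·B₀^{1/d}, where C(μ̂) := 2^{ld}·l·d²·Σ_{M=1}^∞ M^{ld−μ̂/d−1} < ∞. Consequently, the set of ω⃗ ∈ ([−1/2,1/2]^d)^l satisfying the Strong Diophantine Condition with exponent μ̂ and some constant B₀ = B₀(ω⃗) > 0 has full Lebesgue measure in ([−1/2,1/2]^d)^l. -/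
open MeasureTheory Set

noncomputable section

/-- `θ_j(ω⃗,N) := ∑_k n_{jk} ω_k`; the determinant of the `d×d` matrix whose columns
are `θ₁,…,θ_d`. -/
def thetaDet {d l : ℕ} (ω : Fin l → EuclideanSpace ℝ (Fin d))
    (N : Matrix (Fin d) (Fin l) ℤ) : ℝ :=
  Matrix.det (Matrix.of fun i j : Fin d => ∑ k, (N j k : ℝ) * ω k i)

/-- `‖N‖_* := ∑_{j,k} |n_{jk}|`, as a real number. -/
def starNorm {d l : ℕ} (N : Matrix (Fin d) (Fin l) ℤ) : ℝ :=
  ((∑ j, ∑ k, (N j k).natAbs : ℕ) : ℝ)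

/-- The Strong Diophantine Condition with constants `B₀ > 0` and exponent `μhat`:
`|det(θ₁(ω⃗,N),…,θ_d(ω⃗,N))| > B₀·‖N‖_*^{−μhat}` for every nondegenerate `N`. -/
def SDC (d l : ℕ) (ω : Fin l → EuclideanSpace ℝ (Fin d)) (B₀ μhat : ℝ) : Prop :=
  ∀ N : Matrix (Fin d) (Fin l) ℤ, (N.map fun z => (z : ℝ)).rank = d →
    B₀ * starNorm N ^ (-μhat) < |thetaDet ω N|

lemma unc_mp (d l : ℕ) : MeasurePreserving
    (fun (ω : Fin l → EuclideanSpace ℝ (Fin d)) (p : Fin l × Fin d) => ω p.1 p.2)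
    volume volume := by
  have hm : Measurable
    (fun (ω : Fin l → EuclideanSpace ℝ (Fin d)) (p : Fin l × Fin d) => ω p.1 p.2) := by
    fun_prop
  refine ⟨hm, ?_⟩
  rw [volume_pi (ι := Fin l × Fin d)]
  symm
  apply Measure.pi_eq
  intro s hs
  rw [Measure.map_apply hm (MeasurableSet.univ_pi hs)]
  have h1 : (fun (ω : Fin l → EuclideanSpace ℝ (Fin d)) (p : Fin l × Fin d) => ω p.1 p.2) ⁻¹'
      (Set.pi univ s) = Set.pi univ (fun k => (@WithLp.ofLp 2 (Fin d → ℝ)) ⁻¹'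
        (Set.pi univ (fun i => s (k, i)))) := by
    ext ω
    simp [Set.mem_pi]
  rw [h1, volume_pi_pi, Fintype.prod_prod_type]
  refine Finset.prod_congr rfl fun k _ => ?_
  rw [(PiLp.volume_preserving_ofLp (Fin d)).measure_preimage
    (MeasurableSet.univ_pi fun i => hs (k, i)).nullMeasurableSet, volume_pi_pi]

lemma exists_cols {d l : ℕ} (N : Matrix (Fin d) (Fin l) ℤ)
    (h : (N.map fun z => (z : ℝ)).rank = d) :
    ∃ κ : Fin d → Fin l, (1 : ℝ) ≤ |Matrix.det (Matrix.of fun i j : Fin d => (N j (κ i) : ℝ))| := by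
  rw [Matrix.rank_eq_finrank_span_cols] at h
  obtain ⟨f, hf, -, hli⟩ := Submodule.exists_fun_fin_finrank_span_eq ℝ
    (Set.range (N.map fun z => (z : ℝ)).col)
  choose g hg using hf
  let e : Fin d ≃ Fin _ := finCongr h.symm
  refine ⟨g ∘ e, ?_⟩
  have h1 : LinearIndependent ℝ
      (Matrix.row (Matrix.of fun i j : Fin d => (N j ((g ∘ e) i) : ℝ))) := by
    have := hli.comp e e.injective
    have h0 : (Matrix.row (Matrix.of fun i j : Fin d => (N j ((g ∘ e) i) : ℝ))) = f ∘ e := by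
      funext i
      simp only [Function.comp, ← hg]
      rfl
    rw [h0]
    exact this
  rw [Matrix.linearIndependent_rows_iff_isUnit, Matrix.isUnit_iff_isUnit_det, isUnit_iff_ne_zero]
    at h1
  have h2 : Matrix.det (Matrix.of fun i j : Fin d => (N j ((g ∘ e) i) : ℝ)) =
      ((Matrix.det (Matrix.of fun i j : Fin d => (N j ((g ∘ e) i)))  : ℤ) : ℝ) := by
    have := (Int.castRingHom ℝ).map_det (Matrix.of fun i j : Fin d => (N j ((g ∘ e) i)))
    rw [eq_intCast] at this
    rw [this]
    congr 1
  rw [h2] at h1 ⊢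
  have h3 := Int.one_le_abs (Int.cast_ne_zero.mp h1)
  exact_mod_cast h3

lemma two_le_norm {d l : ℕ} (N : Matrix (Fin d) (Fin l) ℤ)
    (h : (N.map fun z => (z : ℝ)).rank = d) : d ≤ ∑ j, ∑ k, (N j k).natAbs := by
  obtain ⟨κ, hκ⟩ := exists_cols N h
  have : ∀ j, 1 ≤ ∑ k, (N j k).natAbs := by
    intro j
    by_contra hc
    have h0 : ∑ k, (N j k).natAbs = 0 := by omega
    rw [Finset.sum_eq_zero_iff] at h0
    rw [Matrix.det_eq_zero_of_column_eq_zero j] at hκ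
    · norm_num at hκ
    · intro i
      have := h0 (κ i) (Finset.mem_univ _)
      simp only [Int.natAbs_eq_zero] at this
      simp [this]
  calc d = ∑ j : Fin d, 1 := by simp
    _ ≤ _ := Finset.sum_le_sum fun j _ => this j

/-- nonnegative count -/
lemma choose_bound (M n : ℕ) (hM : 2 ≤ M) :
    2 * (M + (n + 1)).choose (n + 1) ≤ 3 * M ^ (n + 1) := by
  induction n with
  | zero => simp; omega
  | succ n ih =>
    have h := Nat.add_one_mul_choose_eq (M + (n + 1)) (n + 1)
    have e : M + (n + 1) + 1 = M + (n + 1 + 1) := by ring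
    rw [e] at h
    have h2 : (M + (n + 1 + 1)) ≤ M * (n + 1 + 1) := by nlinarith
    have h3 : (M + (n + 1 + 1)).choose (n + 1 + 1) ≤ M * (M + (n + 1)).choose (n + 1) := by
      apply Nat.le_of_mul_le_mul_right _ (Nat.succ_pos (n + 1))
      calc _ = _ := h.symm
        _ ≤ M * (n + 1 + 1) * (M + (n + 1)).choose (n + 1) := Nat.mul_le_mul_right _ h2
        _ = _ := by simp only [Nat.succ_eq_add_one]; ring
    calc _ ≤ M * (2 * (M + (n + 1)).choose (n + 1)) := by nlinarith
      _ ≤ M * (3 * M ^ (n + 1)) := Nat.mul_le_mul_left _ ih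
      _ = _ := by ring

lemma count_bound (d l : ℕ) (hn : 3 ≤ l * d) (M : ℕ) (hM : 2 ≤ M) :
    ∃ F : Finset (Matrix (Fin d) (Fin l) ℤ),
      (∀ N : Matrix (Fin d) (Fin l) ℤ, (∑ j, ∑ k, (N j k).natAbs) = M → N ∈ F) ∧
      2 * F.card ≤ 2 ^ (l * d) * (l * d) * M ^ (l * d - 1) := by
  classical
  let A := (Finset.univ : Finset (Fin d × Fin l)).finsuppAntidiag M
  let P := A ×ˢ (Finset.univ : Finset (Fin d × Fin l → Bool))
  let φ : ((Fin d × Fin l →₀ ℕ) × (Fin d × Fin l → Bool)) → Matrix (Fin d) (Fin l) ℤ :=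
    fun p j k => if p.2 (j, k) then (p.1 (j, k) : ℤ) else - (p.1 (j, k) : ℤ)
  refine ⟨P.image φ, ?_, ?_⟩
  · intro N hN
    rw [Finset.mem_image]
    refine ⟨(Finsupp.equivFunOnFinite.symm fun p => (N p.1 p.2).natAbs,
      fun p => decide (0 ≤ N p.1 p.2)), ?_, ?_⟩
    · simp only [P, A, Finset.mem_product, Finset.mem_finsuppAntidiag, Finset.mem_univ, and_true]
      refine ⟨?_, by simp⟩
      rw [← hN, Fintype.sum_prod_type]
      rfl
    · funext j k
      simp only [φ, Finsupp.equivFunOnFinite_symm_apply_apply, decide_eq_true_eq]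
      split_ifs <;> omega
  · have h1 : (P.image φ).card ≤ (l * d + M - 1).choose M * 2 ^ (l * d) := by
      refine Finset.card_image_le.trans ?_
      simp only [P, A, Finset.card_product, Finset.card_finsuppAntidiag_nat_eq_choose]
      simp [Nat.mul_comm d l]
    obtain ⟨n, hn'⟩ : ∃ n, l * d = n + 1 + 1 := ⟨l * d - 2, by omega⟩
    have h2 := choose_bound M n hM
    have h3 : (l * d + M - 1).choose M = (M + (n + 1)).choose (n + 1) := by
      rw [hn', show n + 1 + 1 + M - 1 = M + (n + 1) by omega]
      exact (Nat.choose_symm_add)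
    rw [h3] at h1
    have h4 : l * d - 1 = n + 1 := by omega
    rw [h4]
    calc 2 * (P.image φ).card ≤ 2 ^ (l * d) * (2 * (M + (n + 1)).choose (n + 1)) := by nlinarith
      _ ≤ 2 ^ (l * d) * (3 * M ^ (n + 1)) := Nat.mul_le_mul_left _ h2
      _ ≤ 2 ^ (l * d) * ((l * d) * M ^ (n + 1)) := by gcongr
      _ = _ := by ring

/-- Uniform probability on the unit interval. -/
def nuI : Measure ℝ := volume.restrict (Set.Icc (-(1 : ℝ)/2) (1/2))

instance nuI_prob : IsProbabilityMeasure nuI := by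
  constructor
  simp only [nuI, Measure.restrict_apply MeasurableSet.univ, Set.univ_inter, Real.volume_Icc]
  norm_num

lemma step_bound {ι : Type*} [Fintype ι] [DecidableEq ι] (P Q R : (ι → ℝ) → ℝ)
    (hPm : Measurable P) (hQm : Measurable Q) (i : ι)
    (hP : ∀ x, P x = x i * Q x + R x)
    (hQ : ∀ x t, Q (Function.update x i t) = Q x)
    (hR : ∀ x t, R (Function.update x i t) = R x) (ε δ : ℝ) (hε : 0 < ε) (hδ : 0 < δ) :
    (Measure.pi fun _ : ι => nuI) {x | |P x| < ε} ≤
      (Measure.pi fun _ : ι => nuI) {x | |Q x| < δ} + ENNReal.ofReal (2 * ε / δ) := by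
  have mP : MeasurableSet {x | |P x| < ε} := measurableSet_lt (by fun_prop) measurable_const
  have mQ : MeasurableSet {x | |Q x| < δ} := measurableSet_lt (by fun_prop) measurable_const
  let f : (ι → ℝ) → ENNReal := {x | |P x| < ε}.indicator 1
  let g : (ι → ℝ) → ENNReal := fun x => {x | |Q x| < δ}.indicator 1 x + ENNReal.ofReal (2 * ε / δ)
  have mf : Measurable f := measurable_one.indicator mP
  have mg : Measurable g := (measurable_one.indicator mQ).add measurable_const
  have key : ∫⁻ x, f x ∂(Measure.pi fun _ : ι => nuI) ≤ ∫⁻ x, g x ∂(Measure.pi fun _ : ι => nuI) := by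
    refine lintegral_le_of_lmarginal_le {i} mf mg ?_
    intro x
    rw [lmarginal_singleton, lmarginal_singleton]
    have hg : ∀ t, g (Function.update x i t) = g x := by
      intro t
      simp only [g, Set.indicator, Set.mem_ofPred_eq, hQ]
      rfl
    simp only [hg, lintegral_const, measure_univ, mul_one]
    by_cases hq : |Q x| < δ
    · calc _ ≤ ∫⁻ t, 1 ∂nuI := by
            refine lintegral_mono fun t => ?_
            exact Set.indicator_le_self' (fun _ _ => zero_le) _
        _ = 1 := by simp
        _ ≤ g x := by
            simp only [g]
            rw [Set.indicator_of_mem (by exact hq)]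
            exact le_self_add
    · push Not at hq
      have hQ0 : 0 < |Q x| := hδ.trans_le hq
      have hQ1 : Q x ≠ 0 := abs_pos.mp hQ0
      calc _ ≤ ∫⁻ t, (Metric.ball (-R x / Q x) (ε / δ)).indicator 1 t ∂nuI := by
            refine lintegral_mono fun t => ?_
            simp only [f]
            by_cases ht : |P (Function.update x i t)| < ε
            · rw [Set.indicator_of_mem (by exact ht), Set.indicator_of_mem]
              · exact le_refl (1 : ENNReal)
              rw [hP, hQ, hR, Function.update_self] at ht
              rw [Metric.mem_ball, Real.dist_eq]
              have e : t - -R x / Q x = (t * Q x + R x) / Q x := by field_simp; ring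
              rw [e, abs_div]
              gcongr
            · rw [Set.indicator_of_notMem (by exact ht)]
              exact zero_le
        _ = nuI (Metric.ball (-R x / Q x) (ε / δ)) := lintegral_indicator_one measurableSet_ball
        _ ≤ volume (Metric.ball (-R x / Q x) (ε / δ)) := Measure.restrict_apply_le _ _
        _ = ENNReal.ofReal (2 * ε / δ) := by rw [Real.volume_ball]; congr 1; ring
        _ ≤ g x := le_add_self
  simp only [f, g] at key
  rw [lintegral_indicator_one mP, lintegral_add_right _ measurable_const,
    lintegral_indicator_one mQ] at key
  simpa using key

/-- Partially differentiated matrix. -/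
def Amat {d l : ℕ} (N : Matrix (Fin d) (Fin l) ℤ) (κ : Fin d → Fin l) (s : Finset (Fin d))
    (x : Fin l × Fin d → ℝ) : Matrix (Fin d) (Fin d) ℝ :=
  Matrix.of fun i j => if i ∈ s then (N j (κ i) : ℝ) else ∑ k, (N j k : ℝ) * x (k, i)

lemma Amat_meas {d l : ℕ} (N : Matrix (Fin d) (Fin l) ℤ) (κ : Fin d → Fin l) (s : Finset (Fin d)) :
    Measurable fun x => (Amat N κ s x).det := by
  simp only [Matrix.det_apply]
  refine Finset.measurable_sum _ fun σ _ => ?_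
  refine Measurable.const_smul ?_ _
  refine Finset.measurable_prod _ fun i _ => ?_
  simp only [Amat, Matrix.of_apply]
  split_ifs <;> fun_prop

lemma Amat_indep {d l : ℕ} (N : Matrix (Fin d) (Fin l) ℤ) (κ : Fin d → Fin l) (s : Finset (Fin d))
    (i : Fin d) (x : Fin l × Fin d → ℝ) (t : ℝ) :
    Amat N κ (insert i s) (Function.update x (κ i, i) t) = Amat N κ (insert i s) x := by
  ext a b
  simp only [Amat, Matrix.of_apply]
  split_ifs with h
  · rfl
  · refine Finset.sum_congr rfl fun k _ => ?_
    rw [Function.update_of_ne]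
    rintro h'
    apply h
    rw [Prod.mk.injEq] at h'
    simp [h'.2]

lemma Amat_expand {d l : ℕ} (N : Matrix (Fin d) (Fin l) ℤ) (κ : Fin d → Fin l) (s : Finset (Fin d))
    (i : Fin d) (hi : i ∉ s) (x : Fin l × Fin d → ℝ) :
    (Amat N κ s x).det = x (κ i, i) * (Amat N κ (insert i s) x).det +
      (Amat N κ s (Function.update x (κ i, i) 0)).det := by
  set y := Function.update x (κ i, i) 0 with hy
  have h1 : Amat N κ s x = (Amat N κ s y).updateRow i
      (x (κ i, i) • (fun j => (N j (κ i) : ℝ)) + Amat N κ s y i) := by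
    ext a b
    by_cases ha : a = i
    · subst ha
      simp only [Matrix.updateRow_self, Pi.add_apply, Pi.smul_apply, smul_eq_mul, Amat,
        Matrix.of_apply, hi, if_false]
      rw [← Finset.add_sum_erase _ _ (Finset.mem_univ (κ a)),
        ← Finset.add_sum_erase (a := κ a) _ (fun k => (N b k : ℝ) * y (k, a)) (Finset.mem_univ (κ a))]
      have : ∑ k ∈ Finset.univ.erase (κ a), (N b k : ℝ) * y (k, a) =
          ∑ k ∈ Finset.univ.erase (κ a), (N b k : ℝ) * x (k, a) := by
        refine Finset.sum_congr rfl fun k hk => ?_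
        rw [hy, Function.update_of_ne]
        intro h
        rw [Prod.mk.injEq] at h
        exact (Finset.ne_of_mem_erase hk) h.1
      rw [this, hy, Function.update_self]
      ring
    · rw [Matrix.updateRow_ne ha]
      simp only [Amat, Matrix.of_apply]
      split_ifs with h
      · rfl
      · refine Finset.sum_congr rfl fun k _ => ?_
        rw [hy, Function.update_of_ne]
        intro h
        rw [Prod.mk.injEq] at h
        exact ha h.2
  have h2 : (Amat N κ s y).updateRow i (fun j => (N j (κ i) : ℝ)) = Amat N κ (insert i s) x := by
    rw [← Amat_indep N κ s i x 0, ← hy]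
    ext a b
    by_cases ha : a = i
    · subst ha
      simp [Amat]
    · rw [Matrix.updateRow_ne ha]
      simp [Amat, ha]
  rw [h1, Matrix.det_updateRow_add, Matrix.det_updateRow_smul, h2, Matrix.updateRow_eq_self]

lemma sub_bound {d l : ℕ} (N : Matrix (Fin d) (Fin l) ℤ) (κ : Fin d → Fin l)
    (hκ : (1 : ℝ) ≤ |Matrix.det (Matrix.of fun i j : Fin d => (N j (κ i) : ℝ))|) (m : ℕ) :
    ∀ (s : Finset (Fin d)), sᶜ.card = m + 1 → ∀ ε : ℝ, 0 < ε →
    (Measure.pi fun _ : Fin l × Fin d => nuI) {x | |(Amat N κ s x).det| < ε} ≤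
      ENNReal.ofReal (2 * ((m + 1 : ℕ) : ℝ) * ε ^ ((1 : ℝ) / ((m + 1 : ℕ) : ℝ))) := by
  have main : ∀ (s : Finset (Fin d)) (i : Fin d), i ∉ s → ∀ ε δ : ℝ, 0 < ε → 0 < δ →
      (Measure.pi fun _ : Fin l × Fin d => nuI) {x | |(Amat N κ s x).det| < ε} ≤
      (Measure.pi fun _ : Fin l × Fin d => nuI) {x | |(Amat N κ (insert i s) x).det| < δ}
        + ENNReal.ofReal (2 * ε / δ) := by
    intro s i hi ε δ hε hδ
    refine step_bound _ _ (fun x => (Amat N κ s (Function.update x (κ i, i) 0)).det)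
      (Amat_meas N κ s) (Amat_meas N κ _) (κ i, i) (Amat_expand N κ s i hi) ?_ ?_ ε δ hε hδ
    · intro x t
      rw [Amat_indep]
    · intro x t
      simp only [Function.update_idem]
  induction m with
  | zero =>
    intro s hs ε hε
    obtain ⟨i, hi⟩ := Finset.card_eq_one.mp hs
    have his : i ∉ s := by
      rw [← Finset.mem_compl, hi]; simp
    have hu : insert i s = Finset.univ := by
      rw [← Finset.compl_eq_empty_iff, Finset.compl_insert, hi]; simp
    refine (main s i his ε 1 hε one_pos).trans ?_
    have : {x | |(Amat N κ (insert i s) x).det| < 1} = ∅ := by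
      rw [hu]
      ext x
      simp only [Amat, Finset.mem_univ, if_true, Set.mem_ofPred_eq, Set.mem_empty_iff_false,
        iff_false, not_lt]
      exact hκ
    rw [this]
    simp
  | succ m ih =>
    intro s hs ε hε
    obtain ⟨i, hi⟩ := Finset.card_pos.mp (by omega : 0 < sᶜ.card)
    have his : i ∉ s := Finset.mem_compl.mp hi
    have hc : (insert i s)ᶜ.card = m + 1 := by
      rw [Finset.compl_insert, Finset.card_erase_of_mem hi]; omega
    set r : ℝ := ((m + 1 : ℕ) : ℝ) with hr
    have hr0 : 0 < r := by positivity
    have hr1 : ((m + 1 + 1 : ℕ) : ℝ) = r + 1 := by push_cast [hr]; ring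
    rw [hr1]
    have hδ : 0 < ε ^ (r / (r + 1)) := Real.rpow_pos_of_pos hε _
    refine (main s i his ε _ hε hδ).trans ((add_le_add_left (ih _ hc _ hδ) _).trans ?_)
    rw [← ENNReal.ofReal_add (by positivity) (by positivity)]
    apply ENNReal.ofReal_le_ofReal
    rw [← Real.rpow_mul hε.le]
    have e1 : r / (r + 1) * (1 / r) = 1 / (r + 1) := by field_simp
    have e2 : 2 * ε / ε ^ (r / (r + 1)) = 2 * ε ^ (1 / (r + 1)) := by
      rw [mul_div_assoc]
      congr 1
      nth_rewrite 1 [← Real.rpow_one ε]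
      rw [← Real.rpow_sub hε]
      congr 1
      field_simp
      ring
    rw [e1, e2]
    apply le_of_eq
    ring

lemma one_bound {d l : ℕ} (hd : 2 ≤ d) (N : Matrix (Fin d) (Fin l) ℤ)
    (h : (N.map fun z => (z : ℝ)).rank = d) (ε : ℝ) (hε : 0 < ε) :
    volume {ω : Fin l → EuclideanSpace ℝ (Fin d) |
          (∀ k i, ω k i ∈ Set.Icc (-(1 : ℝ)/2) (1/2)) ∧ |thetaDet ω N| < ε} ≤
      ENNReal.ofReal (2 * (d : ℝ) * ε ^ ((1 : ℝ) / d)) := by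
  obtain ⟨κ, hκ⟩ := exists_cols N h
  obtain ⟨m, rfl⟩ : ∃ m, d = m + 1 := ⟨d - 1, by omega⟩
  refine le_trans (le_of_eq ?_) (sub_bound N κ hκ m ∅ (by simp) ε hε)
  have mS : MeasurableSet {x | |(Amat N κ ∅ x).det| < ε} :=
    measurableSet_lt ((Amat_meas N κ ∅).norm) measurable_const
  have hpi : (Measure.pi fun _ : Fin l × Fin (m + 1) => nuI) =
      volume.restrict (Set.pi univ fun _ => Set.Icc (-(1 : ℝ)/2) (1/2)) := by
    rw [volume_pi, Measure.restrict_pi_pi]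
    rfl
  rw [hpi, Measure.restrict_apply mS]
  have mB : MeasurableSet ({x | |(Amat N κ ∅ x).det| < ε} ∩
      (Set.pi univ fun _ : Fin l × Fin (m + 1) => Set.Icc (-(1 : ℝ)/2) (1/2))) :=
    mS.inter (MeasurableSet.univ_pi fun _ => measurableSet_Icc)
  rw [← (unc_mp (m + 1) l).measure_preimage mB.nullMeasurableSet]
  congr 1
  ext ω
  simp only [Set.mem_ofPred_eq, Set.mem_preimage, Set.mem_inter_iff, Set.mem_pi, Set.mem_univ,
    true_implies, Prod.forall]
  rw [and_comm]
  have : (Amat N κ ∅ fun p => ω p.1 p.2).det = thetaDet ω N := by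
    simp [Amat, thetaDet]
  rw [this]

lemma shell_bound (d l : ℕ) (hd : 2 ≤ d) (hl : d < l) (μhat : ℝ) (B₀ : ℝ) (hB : 0 < B₀) (M : ℕ) :
    volume {ω : Fin l → EuclideanSpace ℝ (Fin d) |
          (∀ k i, ω k i ∈ Set.Icc (-(1 : ℝ)/2) (1/2)) ∧
          ∃ N : Matrix (Fin d) (Fin l) ℤ, (N.map fun z => (z : ℝ)).rank = d ∧
            (∑ j, ∑ k, (N j k).natAbs) = M + 1 ∧
            |thetaDet ω N| < B₀ * ((M : ℝ) + 1) ^ (-μhat)} ≤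
      ENNReal.ofReal ((2 ^ (l * d) * l * d ^ 2 *
        ((M : ℝ) + 1) ^ ((l : ℝ) * d - μhat / d - 1)) * B₀ ^ ((1 : ℝ)/d)) := by
  classical
  rcases Nat.eq_zero_or_pos M with rfl | hM
  · refine le_of_eq_of_le (measure_mono_null (t := ∅) ?_ measure_empty) zero_le
    rintro ω ⟨-, N, hN, hs, -⟩
    have := two_le_norm N hN
    omega
  have hx : (0 : ℝ) < (M : ℝ) + 1 := by positivity
  have hn : 3 ≤ l * d := by nlinarith
  obtain ⟨F, hF, hcard⟩ := count_bound d l hn (M + 1) (by omega)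
  have hε : 0 < B₀ * ((M : ℝ) + 1) ^ (-μhat) := by positivity
  have hsub : {ω : Fin l → EuclideanSpace ℝ (Fin d) |
          (∀ k i, ω k i ∈ Set.Icc (-(1 : ℝ)/2) (1/2)) ∧
          ∃ N : Matrix (Fin d) (Fin l) ℤ, (N.map fun z => (z : ℝ)).rank = d ∧
            (∑ j, ∑ k, (N j k).natAbs) = M + 1 ∧
            |thetaDet ω N| < B₀ * ((M : ℝ) + 1) ^ (-μhat)} ⊆
      ⋃ N ∈ F.filter (fun N => (N.map fun z => (z : ℝ)).rank = d),
        {ω : Fin l → EuclideanSpace ℝ (Fin d) |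
          (∀ k i, ω k i ∈ Set.Icc (-(1 : ℝ)/2) (1/2)) ∧
            |thetaDet ω N| < B₀ * ((M : ℝ) + 1) ^ (-μhat)} := by
    rintro ω ⟨hb, N, hN, hs, hlt⟩
    rw [Set.mem_iUnion₂]
    exact ⟨N, Finset.mem_filter.mpr ⟨hF N hs, hN⟩, hb, hlt⟩
  refine (measure_mono hsub).trans ((measure_biUnion_finset_le _ _).trans ?_)
  refine (Finset.sum_le_card_nsmul _ _ (ENNReal.ofReal
    (2 * (d : ℝ) * (B₀ * ((M : ℝ) + 1) ^ (-μhat)) ^ ((1 : ℝ) / d))) ?_).trans ?_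
  · intro N hN
    exact one_bound hd N (Finset.mem_filter.mp hN).2 _ hε
  rw [← ENNReal.ofReal_nsmul]
  apply ENNReal.ofReal_le_ofReal
  rw [nsmul_eq_mul]
  have hd0 : (0 : ℝ) < d := by positivity
  have e1 : (B₀ * ((M : ℝ) + 1) ^ (-μhat)) ^ ((1 : ℝ) / d) =
      B₀ ^ ((1 : ℝ) / d) * ((M : ℝ) + 1) ^ (-μhat / d) := by
    rw [Real.mul_rpow hB.le (by positivity), ← Real.rpow_mul hx.le]
    congr 2
    ring
  have e2 : ((M : ℝ) + 1) ^ ((l : ℝ) * d - μhat / d - 1) =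
      ((M : ℝ) + 1) ^ (l * d - 1) * ((M : ℝ) + 1) ^ (-μhat / d) := by
    rw [← Real.rpow_natCast, ← Real.rpow_add hx]
    congr 1
    rw [Nat.cast_sub (by omega)]
    push_cast
    ring
  have hc : 2 * ((F.filter (fun N => (N.map fun z => (z : ℝ)).rank = d)).card : ℝ) ≤
      2 ^ (l * d) * (l * d) * ((M : ℝ) + 1) ^ (l * d - 1) := by
    have h1 : 2 * (F.filter (fun N => (N.map fun z => (z : ℝ)).rank = d)).card ≤
        2 ^ (l * d) * (l * d) * (M + 1) ^ (l * d - 1) :=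
      (Nat.mul_le_mul_left 2 (Finset.card_filter_le _ _)).trans hcard
    exact_mod_cast h1
  rw [e1, e2]
  have hK : 0 ≤ (d : ℝ) * (B₀ ^ ((1 : ℝ) / d) * ((M : ℝ) + 1) ^ (-μhat / d)) := by positivity
  calc _ = (2 * ((F.filter (fun N => (N.map fun z => (z : ℝ)).rank = d)).card : ℝ)) *
        ((d : ℝ) * (B₀ ^ ((1 : ℝ) / d) * ((M : ℝ) + 1) ^ (-μhat / d))) := by ring
    _ ≤ _ := mul_le_mul_of_nonneg_right hc hK
    _ = _ := by ring

lemma summ (d l : ℕ) (hd : 2 ≤ d) (μhat : ℝ) (hμ : (l : ℝ) * (d : ℝ) ^ 2 < μhat) :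
    Summable (fun M : ℕ => ((M : ℝ) + 1) ^ ((l : ℝ) * d - μhat / d - 1)) := by
  have hd0 : (0 : ℝ) < d := by positivity
  have h : (l : ℝ) * d - μhat / d - 1 < -1 := by
    have : (l : ℝ) * d < μhat / d := by
      rw [lt_div_iff₀ hd0]; nlinarith
    linarith
  have := (summable_nat_add_iff 1).mpr (Real.summable_nat_rpow.mpr h)
  simpa using this

lemma bad_bound (d l : ℕ) (hd : 2 ≤ d) (hl : d < l)
    (μhat : ℝ) (hμ : (l : ℝ) * (d : ℝ) ^ 2 < μhat) (B₀ : ℝ) (hB : 0 < B₀) :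
      volume {ω : Fin l → EuclideanSpace ℝ (Fin d) |
          (∀ k i, ω k i ∈ Set.Icc (-(1 : ℝ)/2) (1/2)) ∧
          ∃ N : Matrix (Fin d) (Fin l) ℤ, (N.map fun z => (z : ℝ)).rank = d ∧
            |thetaDet ω N| < B₀ * starNorm N ^ (-μhat)} ≤
        ENNReal.ofReal
          ((2 ^ (l * d) * l * d ^ 2 *
              ∑' M : ℕ, ((M : ℝ) + 1) ^ ((l : ℝ) * d - μhat / d - 1)) *
            B₀ ^ ((1 : ℝ)/d)) := by
  have hs := summ d l hd μhat hμ
  rw [← tsum_mul_left, ← tsum_mul_right, ENNReal.ofReal_tsum_of_nonneg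
    (fun M => by positivity) ((hs.mul_left _).mul_right _)]
  refine le_trans (measure_mono ?_) ((measure_iUnion_le _).trans
    (ENNReal.tsum_le_tsum fun M => shell_bound d l hd hl μhat B₀ hB M))
  rintro ω ⟨hb, N, hN, hlt⟩
  rw [Set.mem_iUnion]
  have h2 := two_le_norm N hN
  refine ⟨(∑ j, ∑ k, (N j k).natAbs) - 1, hb, N, hN, by omega, ?_⟩
  have : (((∑ j, ∑ k, (N j k).natAbs) - 1 : ℕ) : ℝ) + 1 = starNorm N := by
    rw [starNorm, Nat.cast_sub (by omega)]
    push_cast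
    ring
  rw [this]
  exact hlt

lemma null_set (d l : ℕ) (hd : 2 ≤ d) (hl : d < l)
    (μhat : ℝ) (hμ : (l : ℝ) * (d : ℝ) ^ 2 < μhat) :
    volume {ω : Fin l → EuclideanSpace ℝ (Fin d) |
        (∀ k i, ω k i ∈ Set.Icc (-(1 : ℝ)/2) (1/2)) ∧
        ¬ ∃ B₀ : ℝ, 0 < B₀ ∧ SDC d l ω B₀ μhat} = 0 := by
  have hd0 : (0 : ℝ) < d := by positivity
  set C : ℝ := 2 ^ (l * d) * l * d ^ 2 *
              ∑' M : ℕ, ((M : ℝ) + 1) ^ ((l : ℝ) * d - μhat / d - 1) with hC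
  have key : ∀ B : ℝ, 0 < B → volume {ω : Fin l → EuclideanSpace ℝ (Fin d) |
        (∀ k i, ω k i ∈ Set.Icc (-(1 : ℝ)/2) (1/2)) ∧
        ¬ ∃ B₀ : ℝ, 0 < B₀ ∧ SDC d l ω B₀ μhat} ≤ ENNReal.ofReal (C * B ^ ((1 : ℝ) / d)) := by
    intro B hB
    refine (measure_mono ?_).trans (bad_bound d l hd hl μhat hμ B hB)
    rintro ω ⟨hb, hn⟩
    refine ⟨hb, ?_⟩
    by_contra hc
    apply hn
    refine ⟨B / 2, by positivity, fun N hN => ?_⟩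
    have h1 : B * starNorm N ^ (-μhat) ≤ |thetaDet ω N| := by
      by_contra h'
      exact hc ⟨N, hN, not_le.mp h'⟩
    have h2 := two_le_norm N hN
    have h3 : 0 < starNorm N := by
      rw [starNorm]
      exact_mod_cast (by omega : 0 < ∑ j, ∑ k, (N j k).natAbs)
    have h4 : 0 < starNorm N ^ (-μhat) := Real.rpow_pos_of_pos h3 _
    have h5 : B / 2 * starNorm N ^ (-μhat) < B * starNorm N ^ (-μhat) := by
      apply mul_lt_mul_of_pos_right _ h4
      linarith
    exact h5.trans_le h1
  have hlim : Filter.Tendsto (fun B : ℝ => ENNReal.ofReal (C * B ^ ((1 : ℝ) / d)))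
      (nhdsWithin 0 (Set.Ioi 0)) (nhds 0) := by
    have hcont : Continuous (fun B : ℝ => ENNReal.ofReal (C * B ^ ((1 : ℝ) / d))) :=
      ENNReal.continuous_ofReal.comp
        (continuous_const.mul (Real.continuous_rpow_const (by positivity)))
    have := hcont.tendsto 0
    rw [Real.zero_rpow (by positivity), mul_zero, ENNReal.ofReal_zero] at this
    exact this.mono_left nhdsWithin_le_nhds
  refine le_antisymm (ge_of_tendsto hlim ?_) zero_le
  filter_upwards [self_mem_nhdsWithin] with B hB
  exact key B hB

/-- Fix `μhat > l·d²`.  For every `B₀ > 0` the measure of the set of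
frequency vectors in the box for which some nondegenerate integer matrix `N` violates
the SDC bound is at most `C(μhat)·B₀^{1/d}`, where
`C(μhat) = 2^{ld}·l·d²·∑_{M=1}^∞ M^{ld−μhat/d−1} < ∞`.  Consequently, almost every
frequency vector in the box satisfies the SDC with exponent `μhat` and some constant
`B₀ = B₀(ω⃗) > 0`. -/
theorem sdc_generic (d l : ℕ) (hd : 2 ≤ d) (hl : d < l)
    (μhat : ℝ) (hμ : (l : ℝ) * (d : ℝ) ^ 2 < μhat) :
    Summable (fun M : ℕ => ((M : ℝ) + 1) ^ ((l : ℝ) * d - μhat / d - 1)) ∧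
    (∀ B₀ : ℝ, 0 < B₀ →
      volume {ω : Fin l → EuclideanSpace ℝ (Fin d) |
          (∀ k i, ω k i ∈ Set.Icc (-(1 : ℝ)/2) (1/2)) ∧
          ∃ N : Matrix (Fin d) (Fin l) ℤ, (N.map fun z => (z : ℝ)).rank = d ∧
            |thetaDet ω N| < B₀ * starNorm N ^ (-μhat)} ≤
        ENNReal.ofReal
          ((2 ^ (l * d) * l * d ^ 2 *
              ∑' M : ℕ, ((M : ℝ) + 1) ^ ((l : ℝ) * d - μhat / d - 1)) *
            B₀ ^ ((1 : ℝ)/d))) ∧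
    volume {ω : Fin l → EuclideanSpace ℝ (Fin d) |
        (∀ k i, ω k i ∈ Set.Icc (-(1 : ℝ)/2) (1/2)) ∧
        ¬ ∃ B₀ : ℝ, 0 < B₀ ∧ SDC d l ω B₀ μhat} = 0 := by
  exact ⟨summ d l hd μhat hμ, fun B₀ hB => bad_bound d l hd hl μhat hμ B₀ hB,
    null_set d l hd hl μhat hμ⟩

end
end

section
/- Suppose the frequency vector ω⃗ satisfies the Strong Diophantine Condition with constants B₀ ∈ (0,1] and μ̂ > 0, and set μ := μ̂ + d + 1. Let ρ > 0, L ≥ 1, L̃ ≥ 1, and ξ ∈ ℝ^d with | ‖ξ‖² − ρ² | ≤ L; set s := Rank Υ^ℤ_{L,L̃}(ξ) and assume s ≤ d. Let V := span_ℝ(Υ^ℤ_{L,L̃}(ξ)) ⊆ ℝ^l and Γ^ℤ(ξ) := V ∩ ℤ^l. Then there exists a constant C = C(d,l,μ̂,B₀) such that: (i) the Euclidean diameter of {mω⃗ : m ∈ Γ^ℤ(ξ) ∩ ℛ(L,ξ)} in ℝ^d is at most C·L·L̃^{sμ}; (ii) the cardinality of Γ^ℤ(ξ) ∩ ℛ(L,ξ)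 is at most C·L^{s}·L̃^{(s²+1)μ}; and (iii) the diameter of Γ^ℤ(ξ) ∩ ℛ(L,ξ) in the ℓ^∞ norm |·| on ℤ^l is at most C·L·L̃^{(s+2)μ}. -/
open MeasureTheory Set Metric

noncomputable section

/-- `nω⃗ := ∑_j n_j ω_j ∈ ℝ^d`. -/
def intComb {d l : ℕ} (ω : Fin l → EuclideanSpace ℝ (Fin d)) (n : Fin l → ℤ) :
    EuclideanSpace ℝ (Fin d) :=
  ∑ j, (n j : ℝ) • ω j

/-- `|n| := max_j |n_j|`, as a real number. -/
def supAbs {l : ℕ} (n : Fin l → ℤ) : ℝ :=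
  ((Finset.univ.sup fun j => (n j).natAbs : ℕ) : ℝ)

/-- An integer vector viewed as a vector of `ℝ^l`. -/
def intCast {l : ℕ} (m : Fin l → ℤ) : Fin l → ℝ := fun j => (m j : ℝ)

/-- The resonant set `ℛ(L,ξ) = {m ∈ ℤ^l : | ‖ξ + mω⃗‖² − ρ² | ≤ L}`. -/
def Res {d l : ℕ} (ω : Fin l → EuclideanSpace ℝ (Fin d)) (ρ L : ℝ)
    (ξ : EuclideanSpace ℝ (Fin d)) : Set (Fin l → ℤ) :=
  {m | |‖ξ + intComb ω m‖ ^ 2 - ρ ^ 2| ≤ L}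

/-- `Υ^ℤ_{L,L̃}(ξ)`: integer vectors `(L,L̃)`-conjugate to `0` with respect to `ξ`. -/
def Ups {d l : ℕ} (ω : Fin l → EuclideanSpace ℝ (Fin d)) (ρ L Ltilde : ℝ)
    (ξ : EuclideanSpace ℝ (Fin d)) : Set (Fin l → ℤ) :=
  {m' | ∃ (k : ℕ) (c : ℕ → (Fin l → ℤ)),
    c 0 = 0 ∧ c k = m' ∧
    (∀ i ≤ k, c i ∈ Res ω ρ L ξ) ∧
    (∀ i < k, supAbs (c (i + 1) - c i) < Ltilde)}

/-- `Γ^ℤ(ξ) := span_ℝ(Υ^ℤ_{L,L̃}(ξ)) ∩ ℤ^l`: the integer vectors lying in the real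
span of `Υ^ℤ_{L,L̃}(ξ)`. -/
def GammaZ {d l : ℕ} (ω : Fin l → EuclideanSpace ℝ (Fin d)) (ρ L Ltilde : ℝ)
    (ξ : EuclideanSpace ℝ (Fin d)) : Set (Fin l → ℤ) :=
  {m | intCast m ∈ Submodule.span ℝ (intCast '' Ups ω ρ L Ltilde ξ)}

/-! helper lemmas -/

lemma sq_le_help {a b : ℝ} (h : a ^ 2 ≤ b ^ 2) (hb : 0 ≤ b) : a ≤ b := by
  by_contra hc
  push Not at hc
  nlinarith

lemma proj_bound {d : ℕ} (W : Submodule ℝ (EuclideanSpace ℝ (Fin d)))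
    (ξ x : EuclideanSpace ℝ (Fin d)) (A L : ℝ) (hA : 0 ≤ A) (hL : 1 ≤ L)
    (h : ∀ z ∈ W, |inner ℝ ξ z| ≤ A * ‖z‖) (hx : x ∈ W)
    (hr : ‖ξ + x‖ ^ 2 - ‖ξ‖ ^ 2 ≤ 2 * L) :
    ‖W.starProjection ξ + x‖ ≤ A + 2 * L := by
  set η := W.starProjection ξ with hη
  have hηW : η ∈ W := W.starProjection_apply_mem ξ
  have ho : ∀ z ∈ W, inner ℝ ξ z = inner ℝ η z := by
    intro z hz
    have := W.starProjection_inner_eq_zero ξ z hz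
    rw [inner_sub_left] at this
    linarith
  have h1 : ‖η‖ ≤ A := by
    have h2 := h η hηW
    rw [ho η hηW, real_inner_self_eq_norm_sq, abs_of_nonneg (by positivity)] at h2
    by_contra hc
    push Not at hc
    nlinarith [norm_nonneg η]
  rw [norm_add_sq_real, ho x hx] at hr
  have h3 : ‖η + x‖ ^ 2 ≤ A ^ 2 + 2 * L := by
    rw [norm_add_sq_real]
    nlinarith [norm_nonneg η]
  apply sq_le_help _ (by positivity)
  nlinarith

lemma inner_bound {d : ℕ} (W : Submodule ℝ (EuclideanSpace ℝ (Fin d)))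
    (ξ x p : EuclideanSpace ℝ (Fin d)) (A L : ℝ) (hA : 0 ≤ A) (hL : 1 ≤ L)
    (h : ∀ z ∈ W, |inner ℝ ξ z| ≤ A * ‖z‖) (hx : x ∈ W)
    (hr : ‖ξ + x‖ ^ 2 - ‖ξ‖ ^ 2 ≤ 2 * L) (hp : p ∈ W) :
    |inner ℝ (ξ + x) p| ≤ (A + 2 * L) * ‖p‖ := by
  have h0 := W.starProjection_inner_eq_zero ξ p hp
  rw [inner_sub_left] at h0
  have : inner ℝ (ξ + x) p = inner ℝ (W.starProjection ξ + x) p := by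
    rw [inner_add_left, inner_add_left]; linarith
  rw [this]
  refine (abs_real_inner_le_norm _ _).trans ?_
  exact mul_le_mul_of_nonneg_right (proj_bound W ξ x A L hA hL h hx hr) (norm_nonneg _)

/-- One step of the geometric induction. -/
lemma geo_step {d : ℕ} (W : Submodule ℝ (EuclideanSpace ℝ (Fin d)))
    (ξ x w : EuclideanSpace ℝ (Fin d)) (A L D : ℝ) (hA : 0 ≤ A) (hL : 1 ≤ L) (hD : 1 ≤ D)
    (h : ∀ z ∈ W, |inner ℝ ξ z| ≤ A * ‖z‖) (hx : x ∈ W) (hw : ‖w‖ ≤ D)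
    (hr : ‖ξ + x‖ ^ 2 - ‖ξ‖ ^ 2 ≤ 2 * L)
    (hr2 : |‖ξ + x + w‖ ^ 2 - ‖ξ + x‖ ^ 2| ≤ 2 * L) :
    ∃ A' : ℝ, 0 ≤ A' ∧ (∀ z ∈ W ⊔ Submodule.span ℝ {w}, |inner ℝ ξ z| ≤ A' * ‖z‖) ∧
      (A' + (2 * L + D)) * ‖w - W.starProjection w‖ ≤ (A + (2 * L + D)) * (3 * D) := by
  set p := W.starProjection w with hp
  have hpW : p ∈ W := W.starProjection_apply_mem w
  have hpn : ‖p‖ ≤ D := (W.norm_starProjection_apply_le w).trans hw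
  set q := w - p with hq
  have hqo : ∀ z ∈ W, inner ℝ q z = 0 := fun z hz => W.starProjection_inner_eq_zero w z hz
  have hqn : ‖q‖ ≤ D := by
    have : ‖w‖ ^ 2 = ‖q‖ ^ 2 + ‖p‖ ^ 2 := by
      have e : w = q + p := by rw [hq]; abel
      conv_lhs => rw [e]
      rw [norm_add_sq_real, hqo p hpW]; ring
    apply sq_le_help _ (by positivity)
    nlinarith [norm_nonneg w, sq_nonneg ‖p‖]
  have hin : |inner ℝ ξ q| ≤ L + D ^ 2 / 2 + (A + 2 * L) * D := by
    have e1 : inner ℝ ξ q = inner ℝ (ξ + x) w - inner ℝ (ξ + x) p := by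
      rw [← inner_sub_right, ← hq, inner_add_left, real_inner_comm q x, hqo x hx, add_zero]
    have b1 : |inner ℝ (ξ + x) w| ≤ L + D ^ 2 / 2 := by
      rw [norm_add_sq_real (ξ + x) w] at hr2
      have := abs_le.mp hr2
      have : ‖w‖ ^ 2 ≤ D ^ 2 := by gcongr
      rw [abs_le]; constructor <;> nlinarith [sq_nonneg ‖w‖]
    have b2 := inner_bound W ξ x p A L hA hL h hx hr hpW
    have b3 : (A + 2 * L) * ‖p‖ ≤ (A + 2 * L) * D := by gcongr
    rw [e1]
    exact (abs_sub _ _).trans (by linarith)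
  have hmul : |inner ℝ ξ q| / ‖q‖ * ‖q‖ = |inner ℝ ξ q| := by
    by_cases h0 : q = 0
    · simp [h0]
    · field_simp
  refine ⟨A + |inner ℝ ξ q| / ‖q‖, by positivity, ?_, ?_⟩
  · intro z hz
    obtain ⟨a, ha, b, hb, rfl⟩ := Submodule.mem_sup.mp hz
    obtain ⟨t, rfl⟩ := Submodule.mem_span_singleton.mp hb
    set a' := a + t • p with ha'
    have ha'W : a' ∈ W := W.add_mem ha (W.smul_mem t hpW)
    have e : a + t • w = a' + t • q := by rw [ha', hq, smul_sub]; abel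
    rw [e]
    have hn : ‖a' + t • q‖ ^ 2 = ‖a'‖ ^ 2 + ‖t • q‖ ^ 2 := by
      rw [norm_add_sq_real, real_inner_comm, inner_smul_left, hqo a' ha'W]; simp
    have n1 : ‖a'‖ ≤ ‖a' + t • q‖ := by
      apply sq_le_help _ (norm_nonneg _); nlinarith [sq_nonneg ‖t • q‖]
    have n2 : ‖t • q‖ ≤ ‖a' + t • q‖ := by
      apply sq_le_help _ (norm_nonneg _); nlinarith [sq_nonneg ‖a'‖]
    rw [inner_add_right, add_mul]
    refine (abs_add_le _ _).trans (add_le_add ((h a' ha'W).trans (by gcongr)) ?_)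
    calc |inner ℝ ξ (t • q)| = |inner ℝ ξ q| / ‖q‖ * ‖t • q‖ := by
          rw [inner_smul_right, abs_mul, norm_smul, Real.norm_eq_abs]
          calc _ = |t| * (|inner ℝ ξ q| / ‖q‖ * ‖q‖) := by rw [hmul]
            _ = _ := by ring
      _ ≤ _ := by gcongr
  · have : (A + |inner ℝ ξ q| / ‖q‖ + (2 * L + D)) * ‖q‖
        = (A + (2 * L + D)) * ‖q‖ + |inner ℝ ξ q| := by rw [add_right_comm, add_mul, hmul]
    rw [this]
    have : (A + (2 * L + D)) * ‖q‖ ≤ (A + (2 * L + D)) * D := by gcongr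
    nlinarith [mul_nonneg hA (zero_le_one.trans hD), mul_le_mul hL hD (by norm_num) (by linarith)]

/-- The determinant as an alternating map. -/
def Dl (d : ℕ) : EuclideanSpace ℝ (Fin d) [⋀^Fin d]→ₗ[ℝ] ℝ :=
  (EuclideanSpace.basisFun (Fin d) ℝ).toBasis.det

lemma Dl_le {d : ℕ} (y : Fin d → EuclideanSpace ℝ (Fin d)) : |Dl d y| ≤ ∏ i, ‖y i‖ := by
  have : Fact (Module.finrank ℝ (EuclideanSpace ℝ (Fin d)) = d) := ⟨by simp⟩
  have := (EuclideanSpace.basisFun (Fin d) ℝ).toBasis.orientation.abs_volumeForm_apply_le y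
  rwa [Orientation.volumeForm_robust' _ (EuclideanSpace.basisFun (Fin d) ℝ)] at this

lemma Dl_theta {d l : ℕ} (ω : Fin l → EuclideanSpace ℝ (Fin d)) (N : Matrix (Fin d) (Fin l) ℤ) :
    thetaDet ω N = Dl d (fun j => intComb ω (N j)) := by
  unfold thetaDet Dl
  rw [Module.Basis.det_apply]
  congr 1
  ext i j
  simp [Module.Basis.toMatrix_apply, intComb]

lemma Dl_update_zero {d : ℕ} (y : Fin d → EuclideanSpace ℝ (Fin d)) (j : Fin d)
    (p : EuclideanSpace ℝ (Fin d)) (hp : p ∈ Submodule.span ℝ (y '' {i | i ≠ j})) :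
    Dl d (Function.update y j p) = 0 := by
  induction hp using Submodule.span_induction with
  | mem x hx =>
    obtain ⟨i, hi, rfl⟩ := hx
    exact (Dl d).map_update_self y (Ne.symm hi)
  | zero => exact (Dl d).map_update_zero y j
  | add x z _ _ h1 h2 => rw [(Dl d).map_update_add, h1, h2, add_zero]
  | smul a x _ h1 => rw [(Dl d).map_update_smul, h1, smul_zero]

lemma Dl_update_sub {d : ℕ} (y : Fin d → EuclideanSpace ℝ (Fin d)) (j : Fin d)
    (p : EuclideanSpace ℝ (Fin d)) (hp : p ∈ Submodule.span ℝ (y '' {i | i ≠ j})) :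
    Dl d (Function.update y j (y j - p)) = Dl d y := by
  rw [(Dl d).map_update_sub, Dl_update_zero y j p hp, Function.update_eq_self, sub_zero]

/-- The linear extension of `intComb`. -/
def Phi {d l : ℕ} (ω : Fin l → EuclideanSpace ℝ (Fin d)) :
    (Fin l → ℝ) →ₗ[ℝ] EuclideanSpace ℝ (Fin d) := Fintype.linearCombination ℝ ω

lemma Phi_intCast {d l : ℕ} (ω : Fin l → EuclideanSpace ℝ (Fin d)) (n : Fin l → ℤ) :
    Phi ω (intCast n) = intComb ω n := by
  simp [Phi, intComb, intCast, Fintype.linearCombination_apply]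

lemma intCast_sub {l : ℕ} (m n : Fin l → ℤ) : intCast (m - n) = intCast m - intCast n := by
  ext; simp [intCast]

lemma intCast_zero' {l : ℕ} : intCast (0 : Fin l → ℤ) = 0 := by
  ext; simp [intCast]

lemma intComb_sub {d l : ℕ} (ω : Fin l → EuclideanSpace ℝ (Fin d)) (m n : Fin l → ℤ) :
    intComb ω (m - n) = intComb ω m - intComb ω n := by
  rw [← Phi_intCast, intCast_sub, map_sub, Phi_intCast, Phi_intCast]

lemma abs_le_supAbs {l : ℕ} (n : Fin l → ℤ) (k : Fin l) : |(n k : ℝ)| ≤ supAbs n := by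
  unfold supAbs
  have : (n k).natAbs ≤ Finset.univ.sup fun j => (n j).natAbs :=
    Finset.le_sup (f := fun j => (n j).natAbs) (Finset.mem_univ k)
  calc |(n k : ℝ)| = ((n k).natAbs : ℝ) := by rw [Nat.cast_natAbs]; simp
    _ ≤ _ := by exact_mod_cast this

lemma supAbs_le {l : ℕ} (n : Fin l → ℤ) (B : ℝ) (hB : 0 ≤ B) (h : ∀ k, |(n k : ℝ)| ≤ B) :
    supAbs n ≤ B := by
  unfold supAbs
  rw [← Nat.le_floor_iff hB]
  refine Finset.sup_le fun k _ => ?_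
  rw [Nat.le_floor_iff hB, Nat.cast_natAbs]
  simpa using h k

lemma norm_omega {d : ℕ} (hd : 1 ≤ d) (x : EuclideanSpace ℝ (Fin d))
    (h : ∀ i, x i ∈ Set.Icc (-(1 : ℝ)/2) (1/2)) : ‖x‖ ≤ d := by
  have hd' : (1 : ℝ) ≤ d := by exact_mod_cast hd
  apply sq_le_help _ (by positivity)
  rw [EuclideanSpace.norm_sq_eq]
  calc ∑ i, ‖x i‖ ^ 2 ≤ ∑ i : Fin d, (1 : ℝ) := by
        refine Finset.sum_le_sum fun i _ => ?_
        obtain ⟨a, b⟩ := h i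
        rw [Real.norm_eq_abs, sq_abs]; nlinarith
    _ = d := by simp
    _ ≤ _ := by nlinarith

lemma norm_intComb {d l : ℕ} (hd : 1 ≤ d) (ω : Fin l → EuclideanSpace ℝ (Fin d))
    (hω : ∀ j i, ω j i ∈ Set.Icc (-(1 : ℝ)/2) (1/2)) (n : Fin l → ℤ) (B : ℝ)
    (h : ∀ k, |(n k : ℝ)| ≤ B) : ‖intComb ω n‖ ≤ (d * l : ℝ) * B := by
  unfold intComb
  calc _ ≤ ∑ j, ‖(n j : ℝ) • ω j‖ := norm_sum_le _ _
    _ ≤ ∑ j : Fin l, B * d := by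
        refine Finset.sum_le_sum fun j _ => ?_
        rw [norm_smul, Real.norm_eq_abs]
        exact mul_le_mul (h j) (norm_omega hd _ (hω j)) (norm_nonneg _) ((abs_nonneg _).trans (h j))
    _ = _ := by simp; ring

lemma span_Iio_succ {l : ℕ} (v : ℕ → Fin l → ℤ) (j : ℕ) (w : Fin l → ℤ) :
    Submodule.span ℝ ((fun i => intCast (Function.update v j w i)) '' Set.Iio (j + 1)) =
      Submodule.span ℝ ((fun i => intCast (v i)) '' Set.Iio j) ⊔ Submodule.span ℝ {intCast w} := by
  have h1 : Set.Iio (j + 1) = insert j (Set.Iio j) := by ext; simp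
  have h2 : (fun i => intCast (Function.update v j w i)) '' Set.Iio j
      = (fun i => intCast (v i)) '' Set.Iio j := by
    apply Set.image_congr
    intro i hi
    rw [Function.update_of_ne (ne_of_lt hi)]
  rw [h1, Set.image_insert_eq, h2, Submodule.span_insert, sup_comm]
  simp

lemma indep_Iio_succ {l : ℕ} (v : ℕ → Fin l → ℤ) (j : ℕ) (w : Fin l → ℤ)
    (hv : LinearIndepOn ℝ (fun i => intCast (v i)) (Set.Iio j))
    (hw : intCast w ∉ Submodule.span ℝ ((fun i => intCast (v i)) '' Set.Iio j)) :
    LinearIndepOn ℝ (fun i => intCast (Function.update v j w i)) (Set.Iio (j + 1)) := by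
  have h1 : Set.Iio (j + 1) = insert j (Set.Iio j) := by ext; simp
  have h2 : Set.EqOn (fun i => intCast (Function.update v j w i)) (fun i => intCast (v i))
      (Set.Iio j) := by
    intro i hi
    simp only
    rw [Function.update_of_ne (ne_of_lt hi)]
  rw [h1, linearIndepOn_insert (by simp), linearIndepOn_congr h2, Set.image_congr h2]
  exact ⟨hv, by simpa using hw⟩

lemma finrank_Iio {l : ℕ} (v : ℕ → Fin l → ℤ) (j : ℕ)
    (hv : LinearIndepOn ℝ (fun i => intCast (v i)) (Set.Iio j)) :
    Module.finrank ℝ (Submodule.span ℝ ((fun i => intCast (v i)) '' Set.Iio j)) = j := by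
  have := finrank_span_eq_card hv
  rw [Set.image_eq_range]
  simpa using this

/-- Extension by standard basis vectors. -/
lemma extend_indep {l s d : ℕ} (hsd : s ≤ d) (hdl : d ≤ l) (B : ℝ) (hB : 1 ≤ B)
    (v : ℕ → Fin l → ℤ)
    (hv : LinearIndepOn ℝ (fun i => intCast (v i)) (Set.Iio s))
    (hb : ∀ i < s, ∀ k, |(v i k : ℝ)| ≤ B) :
    ∃ u : ℕ → Fin l → ℤ, (∀ i < s, u i = v i) ∧
      LinearIndepOn ℝ (fun i => intCast (u i)) (Set.Iio d) ∧
      ∀ i < d, ∀ k, |(u i k : ℝ)| ≤ B := by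
  induction d, hsd using Nat.le_induction with
  | base => exact ⟨v, fun _ _ => rfl, hv, hb⟩
  | succ d hsd ih =>
    obtain ⟨u, h1, h2, h3⟩ := ih (by omega)
    have : ∃ k : Fin l, intCast (Pi.single k 1) ∉
        Submodule.span ℝ ((fun i => intCast (u i)) '' Set.Iio d) := by
      by_contra hc
      push Not at hc
      have htop : Submodule.span ℝ ((fun i => intCast (u i)) '' Set.Iio d) = ⊤ := by
        rw [eq_top_iff, ← (Pi.basisFun ℝ (Fin l)).span_eq, Submodule.span_le]
        rintro _ ⟨k, rfl⟩
        have e : (Pi.basisFun ℝ (Fin l)) k = intCast (Pi.single k 1) := by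
          ext i
          simp [intCast, Pi.single_apply]
        rw [e]
        exact hc k
      have := finrank_Iio u d h2
      rw [htop] at this
      simp at this
      omega
    obtain ⟨k, hk⟩ := this
    refine ⟨Function.update u d (Pi.single k 1), ?_, indep_Iio_succ u d _ h2 hk, ?_⟩
    · intro i hi
      rw [Function.update_of_ne (by omega), h1 i hi]
    · intro i hi k'
      rcases Nat.lt_succ_iff_lt_or_eq.mp hi with hlt | rfl
      · rw [Function.update_of_ne (by omega)]; exact h3 i hlt k'
      · simp only [Function.update_self, Pi.single_apply]
        split_ifs <;> simp <;> linarith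

/-- The key induction. -/
lemma key_induction {d l : ℕ} (hd : 2 ≤ d)  (hl : d < l) (ω : Fin l → EuclideanSpace ℝ (Fin d))
    (hω : ∀ j i, ω j i ∈ Set.Icc (-(1 : ℝ)/2) (1/2))
    (ρ L Lt : ℝ) (ξ : EuclideanSpace ℝ (Fin d)) (hL : 1 ≤ L) (hLt : 1 ≤ Lt)
    (hξ : |‖ξ‖ ^ 2 - ρ ^ 2| ≤ L) (D : ℝ) (hD : D = d * l * Lt) (hD1 : 1 ≤ D) (j : ℕ)
    (hj : j ≤ d)
    (hjs : j ≤ Module.finrank ℝ (Submodule.span ℝ (intCast '' Ups ω ρ L Lt ξ))) :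
    ∃ (v : ℕ → Fin l → ℤ) (A H : ℝ),
      LinearIndepOn ℝ (fun i => intCast (v i)) (Set.Iio j) ∧
      (∀ i < j, ∀ k, |(v i k : ℝ)| ≤ Lt) ∧
      (∀ i < j, intCast (v i) ∈ Submodule.span ℝ (intCast '' Ups ω ρ L Lt ξ)) ∧
      0 ≤ A ∧ 0 ≤ H ∧
      (∀ z ∈ (Submodule.span ℝ ((fun i => intCast (v i)) '' Set.Iio j)).map (Phi ω),
        |inner ℝ ξ z| ≤ A * ‖z‖) ∧
      (A + (2 * L + D)) * H ≤ (2 * L + D) * (3 * D) ^ j ∧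
      (∀ y : Fin d → EuclideanSpace ℝ (Fin d),
        (∀ i : Fin d, (i : ℕ) < j → y i = intComb ω (v i)) →
        |Dl d y| ≤ H * ∏ i : Fin d, if (i : ℕ) < j then 1 else ‖y i‖) := by
  induction j with
  | zero =>
    refine ⟨fun _ => 0, 0, 1, ?_, by simp, by simp, le_refl _, zero_le_one, ?_, by simp, ?_⟩
    · simp
    · simp
    · intro y _
      simpa using Dl_le y
  | succ j ih =>
    obtain ⟨v, A, H, h1, h2, h3, hA, hH, h4, h5, h6⟩ := ih (by omega) (by omega)
    set V := Submodule.span ℝ ((fun i => intCast (v i)) '' Set.Iio j) with hV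
    set S := Submodule.span ℝ (intCast '' Ups ω ρ L Lt ξ) with hS
    have hex : ∃ m ∈ Ups ω ρ L Lt ξ, intCast m ∉ V := by
      by_contra hc
      push Not at hc
      have : S ≤ V := by
        rw [hS, Submodule.span_le]
        rintro _ ⟨m, hm, rfl⟩
        exact hc m hm
      have := Submodule.finrank_mono this
      rw [finrank_Iio v j h1] at this
      omega
    obtain ⟨m, ⟨n, c, c0, cn, cR, cc⟩, hmV⟩ := hex
    have hfirst : ∃ i < n, intCast (c i) ∈ V ∧ intCast (c (i + 1)) ∉ V := by
      by_contra hc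
      push Not at hc
      have : ∀ i ≤ n, intCast (c i) ∈ V := by
        intro i
        induction i with
        | zero => intro _; rw [c0, intCast_zero']; exact V.zero_mem
        | succ i ihh => intro hi; exact hc i (by omega) (ihh (by omega))
      exact hmV (cn ▸ this n le_rfl)
    obtain ⟨i, hi, hxV, hxw⟩ := hfirst
    set x := c i with hx
    set w := c (i + 1) - c i with hw
    have hwV : intCast w ∉ V := by
      intro hc
      apply hxw
      have : intCast (c (i + 1)) = intCast w + intCast x := by rw [hw, intCast_sub]; abel
      rw [this]
      exact V.add_mem hc hxV
    have hcU : ∀ k ≤ n, intCast (c k) ∈ S := by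
      intro k hk
      apply Submodule.subset_span
      exact ⟨c k, ⟨k, c, c0, rfl, fun i hi => cR i (by omega), fun i hi => cc i (by omega)⟩, rfl⟩
    have hwS : intCast w ∈ S := by
      rw [hw, intCast_sub]
      exact S.sub_mem (hcU _ (by omega)) (hcU _ (by omega))
    have hwb : ∀ k, |(w k : ℝ)| ≤ Lt := fun k => (abs_le_supAbs w k).trans (cc i hi).le
    have hwn : ‖intComb ω w‖ ≤ D := by
      rw [hD]; exact norm_intComb (by omega) ω hω w Lt hwb
    have hxW : intComb ω x ∈ V.map (Phi ω) := ⟨_, hxV, Phi_intCast ω x⟩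
    have r1' : |‖ξ + intComb ω (c i)‖ ^ 2 - ρ ^ 2| ≤ L := cR i hi.le
    have r2' : |‖ξ + intComb ω (c (i + 1))‖ ^ 2 - ρ ^ 2| ≤ L := cR (i + 1) (by omega)
    have r1 := abs_le.mp r1'
    have r2 := abs_le.mp r2'
    have r0 := abs_le.mp hξ
    have hxr : ‖ξ + intComb ω x‖ ^ 2 - ‖ξ‖ ^ 2 ≤ 2 * L := by
      rw [hx]; linarith [r1.2, r0.1]
    have hxr2 : |‖ξ + intComb ω x + intComb ω w‖ ^ 2 - ‖ξ + intComb ω x‖ ^ 2| ≤ 2 * L := by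
      have : ξ + intComb ω x + intComb ω w = ξ + intComb ω (c (i + 1)) := by
        rw [hw, intComb_sub]; abel
      rw [this, hx, abs_le]
      constructor <;> linarith [r1.1, r1.2, r2.1, r2.2]
    obtain ⟨A', hA', g1, g2⟩ := geo_step (V.map (Phi ω)) ξ (intComb ω x) (intComb ω w) A L D hA hL
      hD1 h4 hxW hwn hxr hxr2
    set W := V.map (Phi ω) with hW
    set q := intComb ω w - W.starProjection (intComb ω w) with hq
    refine ⟨Function.update v j w, A', H * ‖q‖, indep_Iio_succ v j w h1 hwV, ?_, ?_, hA',
      by positivity, ?_, ?_, ?_⟩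
    · intro k hk
      rcases Nat.lt_succ_iff_lt_or_eq.mp hk with hlt | rfl
      · rw [Function.update_of_ne (by omega)]; exact h2 k hlt
      · simpa using hwb
    · intro k hk
      rcases Nat.lt_succ_iff_lt_or_eq.mp hk with hlt | rfl
      · rw [Function.update_of_ne (by omega)]; exact h3 k hlt
      · simpa using hwS
    · rw [span_Iio_succ, Submodule.map_sup, Submodule.map_span _ {intCast w}, Set.image_singleton,
        Phi_intCast]
      exact g1
    · calc (A' + (2 * L + D)) * (H * ‖q‖) = ((A' + (2 * L + D)) * ‖q‖) * H := by ring
        _ ≤ ((A + (2 * L + D)) * (3 * D)) * H := by gcongr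
        _ = ((A + (2 * L + D)) * H) * (3 * D) := by ring
        _ ≤ ((2 * L + D) * (3 * D) ^ j) * (3 * D) := by gcongr
        _ = _ := by ring
    · intro y hy
      have hjd : j < d := by omega
      set J : Fin d := ⟨j, hjd⟩ with hJ
      have hyJ : y J = intComb ω w := by
        rw [hy J (by simp [hJ])]; simp [hJ]
      have hylt : ∀ k : Fin d, (k : ℕ) < j → y k = intComb ω (v k) := by
        intro k hk
        rw [hy k (by omega), Function.update_of_ne (by omega)]
      have hspan : W.starProjection (intComb ω w) ∈ Submodule.span ℝ (y '' {i | i ≠ J}) := by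
        have hle : W ≤ Submodule.span ℝ (y '' {i | i ≠ J}) := by
          rw [hW, hV, Submodule.map_span, Submodule.span_le]
          rintro _ ⟨_, ⟨k, hk, rfl⟩, rfl⟩
          have hk' : k < j := hk
          apply Submodule.subset_span
          refine ⟨⟨k, by omega⟩, ?_, ?_⟩
          · simp [hJ]; omega
          · rw [hylt _ hk']; simp [Phi_intCast]
        exact hle (W.starProjection_apply_mem _)
      have e := Dl_update_sub y J _ hspan
      rw [hyJ, ← hq] at e
      rw [← e]
      refine (h6 (Function.update y J q) ?_).trans (le_of_eq ?_)
      · intro k hk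
        rw [Function.update_of_ne (by rintro rfl; simp [hJ] at hk), hylt k hk]
      · rw [mul_assoc]
        congr 1
        rw [Fintype.prod_eq_mul_prod_compl J, Fintype.prod_eq_mul_prod_compl J]
        rw [if_neg (by simp [hJ]), if_pos (by simp [hJ]), Function.update_self, one_mul]
        congr 1
        refine Finset.prod_congr rfl fun k hk => ?_
        have hk' : k ≠ J := by simpa using hk
        have hk'' : (k : ℕ) ≠ j := by
          intro hh; apply hk'; ext; simp [hJ, hh]
        rw [Function.update_of_ne hk']
        by_cases hkj : (k : ℕ) < j
        · rw [if_pos hkj, if_pos (by omega)]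
        · rw [if_neg hkj, if_neg (by omega)]

lemma sdc_lower {d l : ℕ} (hd : 2 ≤ d) (B₀ μhat : ℝ) (hB₀ : 0 < B₀) (hμ : 0 < μhat)
    (ω : Fin l → EuclideanSpace ℝ (Fin d)) (hS : SDC d l ω B₀ μhat) (Lt D : ℝ)
    (hD : D = d * l * Lt) (u : ℕ → Fin l → ℤ)
    (hu : LinearIndepOn ℝ (fun i => intCast (u i)) (Set.Iio d))
    (hb : ∀ i < d, ∀ k, |(u i k : ℝ)| ≤ Lt) :
    B₀ * D ^ (-μhat) ≤ |Dl d (fun i : Fin d => intComb ω (u i))| := by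
  set N : Matrix (Fin d) (Fin l) ℤ := fun i k => u i k with hN
  have hli : LinearIndependent ℝ (fun i : Fin d => intCast (u i)) := by
    have := hu.comp (fun i : Fin d => (⟨i, i.2⟩ : Set.Iio d)) (by
      intro a b hab; ext; exact congrArg (fun z : Set.Iio d => (z : ℕ)) hab)
    exact this
  have hr : (N.map fun z => (z : ℝ)).rank = d := by
    have : LinearIndependent ℝ (N.map fun z => (z : ℝ)).row := hli
    simpa using this.rank_matrix
  have h := hS N hr
  rw [Dl_theta] at h
  refine le_trans ?_ h.le
  have hle : starNorm N ≤ D := by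
    unfold starNorm
    push_cast [Nat.cast_natAbs]
    calc ∑ j, ∑ k, |((N j k : ℤ) : ℝ)| ≤ ∑ j : Fin d, ∑ k : Fin l, Lt :=
          Finset.sum_le_sum fun j _ => Finset.sum_le_sum fun k _ => hb j j.2 k
      _ = D := by simp [hD]; ring
  have hpos : 0 < starNorm N := by
    unfold starNorm
    rw [Nat.cast_pos, Nat.pos_iff_ne_zero]
    intro h0
    have hz := hli.ne_zero (⟨0, by omega⟩ : Fin d)
    apply hz
    ext k
    have := (Finset.sum_eq_zero_iff.mp h0) ⟨0, by omega⟩ (Finset.mem_univ _)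
    have := (Finset.sum_eq_zero_iff.mp this) k (Finset.mem_univ _)
    have := Int.natAbs_eq_zero.mp this
    simp only [intCast, Pi.zero_apply, Int.cast_eq_zero]
    exact this
  have := Real.rpow_le_rpow_of_nonpos hpos hle (by linarith : -μhat ≤ 0)
  gcongr

lemma coeff_bound {d l : ℕ} (hd : 2 ≤ d) (ω : Fin l → EuclideanSpace ℝ (Fin d))
    (hω : ∀ j i, ω j i ∈ Set.Icc (-(1 : ℝ)/2) (1/2)) (Lt D δ : ℝ) (hLt : 1 ≤ Lt)
    (hD : D = d * l * Lt) (hDL : Lt ≤ D) (u : ℕ → Fin l → ℤ) (hδ : 0 < δ)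
    (hb : ∀ i < d, ∀ k, |(u i k : ℝ)| ≤ Lt)
    (hdet : δ ≤ |Dl d (fun i : Fin d => intComb ω (u i))|) (n : Fin l → ℤ)
    (hn : intCast n ∈ Submodule.span ℝ ((fun i => intCast (u i)) '' Set.Iio d)) (k : Fin l) :
    |(n k : ℝ)| * δ ≤ d * (‖intComb ω n‖ * D ^ d) := by
  set y : Fin d → EuclideanSpace ℝ (Fin d) := fun i : Fin d => intComb ω (u i) with hy
  have hyn : ∀ i, ‖y i‖ ≤ D := fun i => by
    rw [hD]; exact norm_intComb (by omega) ω hω _ Lt (hb i i.2)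
  have himg : (fun i => intCast (u i)) '' Set.Iio d = Set.range (fun i : Fin d => intCast (u i)) := by
    ext z; constructor
    · rintro ⟨i, hi, rfl⟩; exact ⟨⟨i, hi⟩, rfl⟩
    · rintro ⟨i, rfl⟩; exact ⟨i, i.2, rfl⟩
  rw [himg, Submodule.mem_span_range_iff_exists_fun] at hn
  obtain ⟨t, ht⟩ := hn
  have hsum : intComb ω n = ∑ i, t i • y i := by
    rw [← Phi_intCast, ← ht, map_sum]
    simp [Phi_intCast, hy]
  have hti : ∀ i, |t i| * δ ≤ ‖intComb ω n‖ * D ^ (d - 1) := by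
    intro i
    have hz : Dl d (Function.update y i (intComb ω n - t i • y i)) = 0 := by
      apply Dl_update_zero
      rw [hsum, Fintype.sum_eq_add_sum_compl i, add_sub_cancel_left]
      refine Submodule.sum_mem _ fun k hk => Submodule.smul_mem _ _ (Submodule.subset_span ?_)
      exact ⟨k, by simpa using hk, rfl⟩
    rw [(Dl d).map_update_sub, (Dl d).map_update_smul, Function.update_eq_self, sub_eq_zero] at hz
    have h1 : |t i| * |Dl d y| = |Dl d (Function.update y i (intComb ω n))| := by
      rw [hz, smul_eq_mul, abs_mul]
    calc |t i| * δ ≤ |t i| * |Dl d y| := by gcongr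
      _ ≤ ∏ k, ‖Function.update y i (intComb ω n) k‖ := by rw [h1]; exact Dl_le _
      _ = ‖intComb ω n‖ * ∏ k ∈ {i}ᶜ, ‖Function.update y i (intComb ω n) k‖ := by
          rw [Fintype.prod_eq_mul_prod_compl i, Function.update_self]
      _ ≤ ‖intComb ω n‖ * ∏ k ∈ ({i}ᶜ : Finset (Fin d)), D := by
          gcongr with k hk
          rw [Function.update_of_ne (by simpa using hk)]
          exact hyn k
      _ = _ := by simp [Finset.card_compl]
  have hk : (n k : ℝ) = ∑ i, t i * (u i k : ℝ) := by
    have := congrFun ht k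
    simp only [Finset.sum_apply, Pi.smul_apply, smul_eq_mul, intCast] at this
    exact this.symm
  rw [hk]
  calc |∑ i, t i * (u i k : ℝ)| * δ ≤ (∑ i, |t i * (u i k : ℝ)|) * δ := by
        gcongr; exact Finset.abs_sum_le_sum_abs _ _
    _ = ∑ i, (|t i| * δ) * |(u i k : ℝ)| := by
        rw [Finset.sum_mul]; refine Finset.sum_congr rfl fun i _ => ?_
        rw [abs_mul]; ring
    _ ≤ ∑ i : Fin d, (‖intComb ω n‖ * D ^ (d - 1)) * D := by
        refine Finset.sum_le_sum fun i _ => ?_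
        have : 0 ≤ D := by linarith
        exact mul_le_mul (hti i) ((hb i i.2 k).trans hDL) (abs_nonneg _) (by positivity)
    _ = _ := by
        obtain ⟨e, rfl⟩ : ∃ e, d = e + 1 := ⟨d - 1, by omega⟩
        simp only [Finset.sum_const, Finset.card_univ, Fintype.card_fin, nsmul_eq_mul, pow_succ,
          Nat.add_sub_cancel]
        ring

/-- Counting integer points of a subspace in a box. -/
lemma count_bound_s11 {l : ℕ} (V : Submodule ℝ (Fin l → ℝ)) (T : Set (Fin l → ℤ))
    (hT : ∀ m ∈ T, intCast m ∈ V) (M : ℝ) (hM : 1 ≤ M) (hb : ∀ m ∈ T, ∀ k, |(m k : ℝ)| ≤ M) :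
    T.Finite ∧ (T.ncard : ℝ) ≤ (3 * M) ^ (Module.finrank ℝ V) := by
  classical
  let f : Fin l → Module.Dual ℝ V := fun k => (LinearMap.proj k).comp V.subtype
  obtain ⟨κ, a, ha, hsp, hli⟩ := exists_linearIndependent' ℝ f
  have : Fintype κ := Fintype.ofInjective a ha
  have hcard : Fintype.card κ ≤ Module.finrank ℝ V := by
    have := hli.fintype_card_le_finrank
    rwa [Subspace.dual_finrank_eq] at this
  have hinj : Set.InjOn (fun (m : Fin l → ℤ) (k : κ) => m (a k)) T := by
    intro m hm m' hm' h
    let z : V := ⟨intCast m - intCast m', V.sub_mem (hT m hm) (hT m' hm')⟩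
    have h0 : ∀ g ∈ Submodule.span ℝ (Set.range (f ∘ a)), g z = 0 := by
      intro g hg
      induction hg using Submodule.span_induction with
      | mem x hx =>
        obtain ⟨k, rfl⟩ := hx
        have := congrFun h k
        simp only at this
        simp [f, z, intCast, this]
      | zero => rfl
      | add x y _ _ h1 h2 => simp [h1, h2]
      | smul c x _ h1 => simp [h1]
    ext k
    have := h0 (f k) (by rw [hsp]; exact Submodule.subset_span ⟨k, rfl⟩)
    simp only [f, z, intCast, LinearMap.comp_apply, Submodule.subtype_apply, LinearMap.proj_apply,
      Pi.sub_apply, sub_eq_zero] at this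
    exact_mod_cast this
  let F : Finset (κ → ℤ) := Fintype.piFinset fun _ => Finset.Icc (-⌊M⌋) ⌊M⌋
  have hmaps : Set.MapsTo (fun (m : Fin l → ℤ) (k : κ) => m (a k)) T (F : Set (κ → ℤ)) := by
    intro m hm
    simp only [F, Finset.mem_coe, Fintype.mem_piFinset, Finset.mem_Icc]
    intro k
    have := abs_le.mp (hb m hm (a k))
    constructor
    · rw [neg_le, Int.le_floor]; push_cast; linarith
    · rw [Int.le_floor]; exact this.2
  have hfin : T.Finite := Set.Finite.of_injOn hmaps hinj F.finite_toSet
  refine ⟨hfin, ?_⟩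
  have h1 : T.ncard ≤ F.card := by
    have := Set.ncard_le_ncard_of_injOn _ hmaps hinj F.finite_toSet
    rwa [Set.ncard_coe_finset] at this
  have h2 : (F.card : ℝ) ≤ (3 * M) ^ (Fintype.card κ) := by
    simp only [F, Fintype.card_piFinset, Finset.prod_const, Int.card_Icc, Finset.card_univ]
    push_cast
    gcongr
    have hfl : 0 ≤ ⌊M⌋ := Int.floor_nonneg.mpr (by linarith)
    have : (((⌊M⌋ + 1 - -⌊M⌋).toNat : ℤ) : ℝ) = 2 * ⌊M⌋ + 1 := by
      rw [Int.toNat_of_nonneg (by omega)]; push_cast; ring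
    have h3 : (((⌊M⌋ + 1 - -⌊M⌋).toNat : ℕ) : ℝ) = 2 * ⌊M⌋ + 1 := by exact_mod_cast this
    rw [h3]
    linarith [Int.floor_le M]
  calc (T.ncard : ℝ) ≤ F.card := by exact_mod_cast h1
    _ ≤ _ := h2
    _ ≤ _ := pow_le_pow_right₀ (by linarith) hcard

lemma prodQ (s e : ℕ) (D : ℝ) :
    ∏ i : Fin (s + e), (if (i : ℕ) < s then (1 : ℝ) else D) = D ^ e := by
  rw [Fin.prod_univ_eq_prod_range (fun i => if i < s then (1 : ℝ) else D) (s + e),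
    Finset.prod_range_add]
  rw [Finset.prod_congr rfl (g := fun _ => (1 : ℝ))]
  · simp
  · intro i hi
    rw [if_pos (Finset.mem_range.mp hi)]

set_option maxHeartbeats 2000000 in
/-- Under the SDC (with `B₀ ∈ (0,1]`, `μhat > 0`, `μ := μhat+d+1`)
there is `C = C(d,l,μhat,B₀)` such that for all `ρ > 0`, `L, L̃ ≥ 1`, and `ξ` with
`|‖ξ‖² − ρ²| ≤ L` and `s := Rank Υ^ℤ_{L,L̃}(ξ) ≤ d`:
(i) the Euclidean diameter of `{mω⃗ : m ∈ Γ^ℤ(ξ) ∩ ℛ(L,ξ)}` is at most `C·L·L̃^{sμ}`;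
(ii) `#(Γ^ℤ(ξ) ∩ ℛ(L,ξ)) ≤ C·L^s·L̃^{(s²+1)μ}`;
(iii) the ℓ∞ diameter of `Γ^ℤ(ξ) ∩ ℛ(L,ξ)` is at most `C·L·L̃^{(s+2)μ}`. -/
theorem gamma_res_bounds (d l : ℕ) (hd : 2 ≤ d) (hl : d < l)
    (B₀ μhat : ℝ) (hB₀ : 0 < B₀) (hB₁ : B₀ ≤ 1) (hμ : 0 < μhat) :
    ∃ C : ℝ, 0 < C ∧
      ∀ ω : Fin l → EuclideanSpace ℝ (Fin d),
        (∀ j i, ω j i ∈ Set.Icc (-(1 : ℝ)/2) (1/2)) →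
        SDC d l ω B₀ μhat →
        ∀ (ρ L Ltilde : ℝ) (ξ : EuclideanSpace ℝ (Fin d)),
          0 < ρ → 1 ≤ L → 1 ≤ Ltilde →
          |‖ξ‖ ^ 2 - ρ ^ 2| ≤ L →
          ∀ s : ℕ,
            s = Module.finrank ℝ
                  (Submodule.span ℝ (intCast '' Ups ω ρ L Ltilde ξ)) →
            s ≤ d →
            (Metric.diam
                ((fun m => intComb ω m) ''
                  (GammaZ ω ρ L Ltilde ξ ∩ Res ω ρ L ξ)) ≤
              C * L * Ltilde ^ ((s : ℝ) * (μhat + d + 1))) ∧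
            ((GammaZ ω ρ L Ltilde ξ ∩ Res ω ρ L ξ).Finite ∧
              ((GammaZ ω ρ L Ltilde ξ ∩ Res ω ρ L ξ).ncard : ℝ) ≤
                C * L ^ s * Ltilde ^ (((s ^ 2 + 1 : ℕ) : ℝ) * (μhat + d + 1))) ∧
            (∀ m ∈ GammaZ ω ρ L Ltilde ξ ∩ Res ω ρ L ξ,
              ∀ m' ∈ GammaZ ω ρ L Ltilde ξ ∩ Res ω ρ L ξ,
                supAbs (m - m') ≤
                  C * L * Ltilde ^ (((s + 2 : ℕ) : ℝ) * (μhat + d + 1))) := by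
  set μ : ℝ := μhat + d + 1 with hμdef
  set E : ℝ := (d : ℝ) * l with hE
  have hd1 : (1 : ℝ) ≤ d := by exact_mod_cast (by omega : 1 ≤ d)
  have hl1 : (1 : ℝ) ≤ l := by exact_mod_cast (by omega : 1 ≤ l)
  have hE1 : 1 ≤ E := one_le_mul_of_one_le_of_one_le hd1 hl1
  have hμ0 : 0 ≤ μ := by positivity
  set G : ℝ := E ^ μ / B₀ with hG
  have hG1 : 1 ≤ G := by
    rw [hG, le_div_iff₀ hB₀, one_mul]
    exact hB₁.trans (Real.one_le_rpow hE1 hμ0)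
  set C1 : ℝ := 3 ^ (d + 1) * G with hC1
  have h3 : (1 : ℝ) ≤ 3 ^ (d + 1) := one_le_pow₀ (by norm_num)
  have hC11 : 1 ≤ C1 := one_le_mul_of_one_le_of_one_le h3 hG1
  set C2 : ℝ := d * (2 * C1) * G with hC2
  have hC2C1 : 2 * C1 ≤ C2 := by
    rw [hC2]
    calc 2 * C1 = 1 * (2 * C1) * 1 := by ring
      _ ≤ _ := by gcongr
  have hC21 : 1 ≤ 3 * C2 := by linarith
  have hCC : 3 * C2 ≤ (3 * C2) ^ d := le_self_pow₀ hC21 (by omega)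
  refine ⟨(3 * C2) ^ d, by positivity, ?_⟩
  intro ω hω hSDC ρ L Lt ξ hρ hL hLt hξ s hs hsd
  set D : ℝ := d * l * Lt with hD
  have hDE : D = E * Lt := rfl
  have hD1 : 1 ≤ D := one_le_mul_of_one_le_of_one_le hE1 hLt
  have hDL : Lt ≤ D := by rw [hDE]; nlinarith
  have hD0 : 0 < D := by linarith
  set δ : ℝ := B₀ * D ^ (-μhat) with hδ
  have hδ0 : 0 < δ := by positivity
  have hLμ : 1 ≤ Lt ^ μ := Real.one_le_rpow hLt hμ0
  have hkey : D ^ (d + 1) = δ * (G * Lt ^ μ) := by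
    have e1 : E ^ μ * Lt ^ μ = D ^ μ := by
      rw [hDE]; exact (Real.mul_rpow (by linarith) (by linarith)).symm
    have e2 : D ^ (-μhat) * D ^ μ = D ^ (d + 1) := by
      rw [← Real.rpow_add hD0, ← Real.rpow_natCast]
      congr 1
      rw [hμdef]; push_cast; ring
    calc D ^ (d + 1) = D ^ (-μhat) * (E ^ μ * Lt ^ μ) := by rw [e1, e2]
      _ = _ := by rw [hδ, hG]; field_simp
  have huse : ∀ X Y : ℝ, X * δ ≤ Y * D ^ (d + 1) → X ≤ Y * (G * Lt ^ μ) := by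
    intro X Y h
    rw [hkey] at h
    refine le_of_mul_le_mul_right (h.trans (le_of_eq ?_)) hδ0
    ring
  obtain ⟨v, A, H, i1, i2, i3, hA, hH, i4, i5, i6⟩ := key_induction hd hl ω hω ρ L Lt ξ hL hLt hξ D
    hD hD1 s hsd hs.le
  set S := Submodule.span ℝ (intCast '' Ups ω ρ L Lt ξ) with hS
  have hVS : Submodule.span ℝ ((fun i => intCast (v i)) '' Set.Iio s) = S := by
    apply Submodule.eq_of_le_of_finrank_eq
    · rw [Submodule.span_le]
      rintro _ ⟨i, hi, rfl⟩
      exact i3 i hi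
    · rw [finrank_Iio v s i1, hs]
  rw [hVS] at i4
  obtain ⟨u, u1, u2, u3⟩ := extend_indep hsd hl.le Lt hLt v i1 i2
  have hSu : S ≤ Submodule.span ℝ ((fun i => intCast (u i)) '' Set.Iio d) := by
    rw [← hVS, Submodule.span_le]
    rintro _ ⟨i, hi, rfl⟩
    have hi' : i < s := hi
    apply Submodule.subset_span
    exact ⟨i, lt_of_lt_of_le hi' hsd, by simp only; rw [u1 i hi']⟩
  have hdet := sdc_lower hd B₀ μhat hB₀ hμ ω hSDC Lt D hD u u2 u3
  have hHd : δ ≤ H * D ^ (d - s) := by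
    refine (hdet.trans (i6 _ ?_)).trans ?_
    · intro i hi
      rw [u1 i hi]
    · gcongr
      obtain ⟨e, he⟩ : ∃ e, d = s + e := ⟨d - s, by omega⟩
      have hq : ∏ i : Fin d, (if (i : ℕ) < s then (1 : ℝ) else D) = D ^ (d - s) := by
        have h := prodQ s e D
        rw [← he] at h
        rw [h]
        congr 1
        omega
      rw [← hq]
      refine Finset.prod_le_prod ?_ ?_
      · intro i _
        split_ifs
        · exact zero_le_one
        · exact norm_nonneg _
      · intro i _
        split_ifs
        · exact le_rfl
        · exact norm_intComb (by omega) ω hω _ Lt (u3 i i.2)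
  have hK : 2 * L + D ≤ 3 * L * D := by nlinarith
  have hAK : A + (2 * L + D) ≤ C1 * L * Lt ^ μ := by
    have : (A + (2 * L + D)) * δ ≤ (3 ^ (d + 1) * L) * D ^ (d + 1) := by
      calc (A + (2 * L + D)) * δ ≤ (A + (2 * L + D)) * (H * D ^ (d - s)) := by gcongr
        _ = ((A + (2 * L + D)) * H) * D ^ (d - s) := by ring
        _ ≤ ((2 * L + D) * (3 * D) ^ s) * D ^ (d - s) := by gcongr
        _ = (2 * L + D) * 3 ^ s * (D ^ s * D ^ (d - s)) := by rw [mul_pow]; ring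
        _ = (2 * L + D) * 3 ^ s * D ^ d := by rw [← pow_add, Nat.add_sub_cancel' hsd]
        _ ≤ (3 * L * D) * 3 ^ d * D ^ d := by
            gcongr
            norm_num
        _ = _ := by ring
    refine (huse _ _ this).trans (le_of_eq ?_)
    rw [hC1]; ring
  have hpt : ∀ m ∈ GammaZ ω ρ L Lt ξ ∩ Res ω ρ L ξ,
      ‖(S.map (Phi ω)).starProjection ξ + intComb ω m‖ ≤ A + 2 * L := by
    rintro m ⟨hm, hr⟩
    have r1 := abs_le.mp (show |‖ξ + intComb ω m‖ ^ 2 - ρ ^ 2| ≤ L from hr)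
    have r0 := abs_le.mp hξ
    exact proj_bound _ ξ _ A L hA hL i4 ⟨_, hm, Phi_intCast ω m⟩ (by linarith [r1.2, r0.1])
  have hdist : ∀ m ∈ GammaZ ω ρ L Lt ξ ∩ Res ω ρ L ξ, ∀ m' ∈ GammaZ ω ρ L Lt ξ ∩ Res ω ρ L ξ,
      ‖intComb ω (m - m')‖ ≤ 2 * C1 * L * Lt ^ μ := by
    intro m hm m' hm'
    have e : intComb ω (m - m') = ((S.map (Phi ω)).starProjection ξ + intComb ω m)
        - ((S.map (Phi ω)).starProjection ξ + intComb ω m') := by rw [intComb_sub]; abel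
    rw [e]
    refine (norm_sub_le _ _).trans ?_
    linarith [hpt m hm, hpt m' hm']
  have hcoef : ∀ m ∈ GammaZ ω ρ L Lt ξ ∩ Res ω ρ L ξ, ∀ m' ∈ GammaZ ω ρ L Lt ξ ∩ Res ω ρ L ξ,
      ∀ k, |((m - m') k : ℝ)| ≤ C2 * L * (Lt ^ μ * Lt ^ μ) := by
    intro m hm m' hm' k
    have hmem : intCast (m - m') ∈ S := by
      rw [intCast_sub]; exact S.sub_mem hm.1 hm'.1
    have hc := coeff_bound hd ω hω Lt D δ hLt hD hDL u hδ0 u3 hdet (m - m') (hSu hmem) k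
    have hh : |((m - m') k : ℝ)| * δ ≤ (d * (2 * C1 * L * Lt ^ μ)) * D ^ (d + 1) := by
      have e1 := hdist m hm m' hm'
      have e2 : D ^ d ≤ D ^ (d + 1) := pow_le_pow_right₀ hD1 (by omega)
      calc _ ≤ d * (‖intComb ω (m - m')‖ * D ^ d) := by simpa using hc
        _ ≤ d * ((2 * C1 * L * Lt ^ μ) * D ^ (d + 1)) := by gcongr
        _ = _ := by ring
    refine (huse _ _ hh).trans (le_of_eq ?_)
    rw [hC2]; ring
  have hmu2 : Lt ^ μ * Lt ^ μ = Lt ^ (2 * μ) := by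
    rw [← Real.rpow_add (by linarith)]; congr 1; ring
  rw [hmu2] at hcoef
  have h2μ : 1 ≤ Lt ^ (2 * μ) := Real.one_le_rpow hLt (by positivity)
  set M : ℝ := C2 * L * Lt ^ (2 * μ) with hM
  have hC2' : 1 ≤ C2 := by linarith
  have hM1 : 1 ≤ M := one_le_mul_of_one_le_of_one_le
    (one_le_mul_of_one_le_of_one_le hC2' hL) h2μ
  refine ⟨?_, ?_, ?_⟩
  · apply Metric.diam_le_of_forall_dist_le (by positivity)
    rintro _ ⟨m, hm, rfl⟩ _ ⟨m', hm', rfl⟩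
    simp only
    rw [dist_eq_norm, ← intComb_sub]
    rcases Nat.eq_zero_or_pos s with h0 | h0
    · have hbot : S = ⊥ := by
        rw [← Submodule.finrank_eq_zero (R := ℝ), ← hs, h0]
      have hmem : intCast (m - m') ∈ S := by
        rw [intCast_sub]; exact S.sub_mem hm.1 hm'.1
      rw [hbot, Submodule.mem_bot] at hmem
      rw [← Phi_intCast, hmem, map_zero, norm_zero]
      positivity
    · refine (hdist m hm m' hm').trans ?_
      have hs1 : (1 : ℝ) ≤ s := by exact_mod_cast h0
      have ex : Lt ^ μ ≤ Lt ^ ((s : ℝ) * μ) :=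
        Real.rpow_le_rpow_of_exponent_le hLt (by nlinarith)
      have hc : 2 * C1 * L ≤ (3 * C2) ^ d * L :=
        mul_le_mul_of_nonneg_right (by linarith) (by linarith)
      exact mul_le_mul hc ex (by positivity) (by positivity)
  · have hT : ∀ m ∈ GammaZ ω ρ L Lt ξ ∩ Res ω ρ L ξ, ∀ k, |(m k : ℝ)| ≤ M := by
      intro m hm k
      have hz : (0 : Fin l → ℤ) ∈ GammaZ ω ρ L Lt ξ ∩ Res ω ρ L ξ := by
        constructor
        · change intCast 0 ∈ S
          rw [intCast_zero']; exact S.zero_mem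
        · change |‖ξ + intComb ω 0‖ ^ 2 - ρ ^ 2| ≤ L
          simpa [intComb] using hξ
      simpa using hcoef m hm 0 hz k
    obtain ⟨f1, f2⟩ := count_bound_s11 S _ (fun m hm => hm.1) M hM1 hT
    refine ⟨f1, f2.trans ?_⟩
    rw [← hs]
    have e : (3 * M) ^ s = (3 * C2) ^ s * L ^ s * Lt ^ (2 * μ * s) := by
      rw [Real.rpow_mul (by linarith), Real.rpow_natCast, hM, ← mul_pow, ← mul_pow]
      congr 1; ring
    rw [e]
    have ex : Lt ^ (2 * μ * s) ≤ Lt ^ (((s ^ 2 + 1 : ℕ) : ℝ) * μ) := by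
      apply Real.rpow_le_rpow_of_exponent_le hLt
      push_cast
      nlinarith [mul_nonneg hμ0 (sq_nonneg ((s : ℝ) - 1))]
    have hc : (3 * C2) ^ s * L ^ s ≤ (3 * C2) ^ d * L ^ s :=
      mul_le_mul_of_nonneg_right (pow_le_pow_right₀ hC21 hsd) (by positivity)
    exact mul_le_mul hc ex (by positivity) (by positivity)
  · intro m hm m' hm'
    apply supAbs_le _ _ (by positivity)
    intro k
    have hk : |(((m - m') k : ℤ) : ℝ)| ≤ M := by simpa using hcoef m hm m' hm' k
    refine hk.trans ?_
    rw [hM]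
    have ex : Lt ^ (2 * μ) ≤ Lt ^ (((s + 2 : ℕ) : ℝ) * μ) := by
      apply Real.rpow_le_rpow_of_exponent_le hLt
      push_cast
      have : (0 : ℝ) ≤ s := by positivity
      nlinarith
    have hc : C2 * L ≤ (3 * C2) ^ d * L :=
      mul_le_mul_of_nonneg_right (by linarith) (by linarith)
    exact mul_le_mul hc ex (by positivity) (by positivity)


end
end
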